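/- Let N ≥ 2, let 0 < δ < 1, and let A ≥ 1. Let f be a smooth real-valued function on a compact interval I = [a, b] such that the N-th derivative f^{(N)} is single-signed on I, and suppose that for all real λ ≠ 0, |∫_I e^{iλ f(x)} dx| ≤ A |λ|^{-δ}. Then there is a constant C, depending only on d, N and δ (and not on f, I, A or λ), such that for every polynomial P of degree d ≥ 2 whose derivative P′ is a semi-non-degenerating (SND) polynomial of degree d − 1, and for all real λ with |λ| ≥ 1, |∫_I e^{iλ P(f(x))} dx| ≤ C · A^{1/(1−δ)} · |λ|^{-δ/d}. -/

import Mathlib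

open MeasureTheory

/-- A real polynomial `Q = a_m x^m + … + a_0` (with `m = Q.natDegree`) is
semi-non-degenerating (SND) if `max_j |a_{m-j}| = 1` and this maximum is attained by
some `j` with `j ≤ m/2`. -/
def IsSND (Q : Polynomial ℝ) : Prop :=
  (∀ i, |Q.coeff i| ≤ 1) ∧ ∃ j, 2 * j ≤ Q.natDegree ∧ |Q.coeff (Q.natDegree - j)| = 1

/-!
Cut `I` into boundedly many intervals on which `f'`, `f''` and `Q' ∘ f`, where `Q = P'`, keep
their signs and on which `|Q ∘ f|` and `|f'|` are each either small or large; the sign of `f^{(N)}`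
bounds the number of cuts. Put `σ = |λ|^{-1/d}`.

* Where `|Q ∘ f| ≤ σ ^ (d - 1)`, the SND condition confines `f` to an interval of length `O(σ)`:
  at any point where `|Q| ≤ 1` some higher Taylor coefficient of `Q` is bounded below. Integrating
  the assumed decay against a Gaussian bounds the measure of `{|f - y| ≤ ε}` by `O(A ε ^ δ)`,
  so the piece has length `O(A σ ^ δ)`.
* Where `|f'| ≤ σ ^ (1 - δ)`, a piece of length `l` is mapped into an interval of length at most
  `σ ^ (1 - δ) l`; the same measure bound gives `l ≤ O(A σ ^ {δ (1 - δ)} l ^ δ)`, that is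
  `l ≤ O(A ^ {1 / (1 - δ)} σ ^ δ)`.
* Otherwise `|(P ∘ f)'| ≥ σ ^ (d - δ)`, and integration by parts bounds the integral by
  `O(σ ^ {δ - d} / |λ|) = O(σ ^ δ)`.
-/

section SingleSigned

open Set intervalIntegral

/-- `g` does not change sign on `s`. -/
def SingleSignedOn (g : ℝ → ℝ) (s : Set ℝ) : Prop :=
  (∀ x ∈ s, 0 ≤ g x) ∨ ∀ x ∈ s, g x ≤ 0

namespace SingleSignedOn

variable {g h : ℝ → ℝ} {s t : Set ℝ}

theorem mono (hg : SingleSignedOn g s) (hts : t ⊆ s) : SingleSignedOn g t :=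
  hg.imp (fun H x hx => H x (hts hx)) fun H x hx => H x (hts hx)

theorem mul (hg : SingleSignedOn g s) (hh : SingleSignedOn h s) :
    SingleSignedOn (fun x => g x * h x) s := by
  rcases hg with hg | hg <;> rcases hh with hh | hh
  · exact .inl fun x hx => mul_nonneg (hg x hx) (hh x hx)
  · exact .inr fun x hx => mul_nonpos_of_nonneg_of_nonpos (hg x hx) (hh x hx)
  · exact .inr fun x hx => mul_nonpos_of_nonpos_of_nonneg (hg x hx) (hh x hx)
  · exact .inl fun x hx => mul_nonneg_of_nonpos_of_nonpos (hg x hx) (hh x hx)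

theorem of_ne_zero (hs : IsPreconnected s) (hg : ContinuousOn g s) (h0 : ∀ x ∈ s, g x ≠ 0) :
    SingleSignedOn g s := by
  by_contra hcon
  simp only [SingleSignedOn, not_or, not_forall, not_le] at hcon
  obtain ⟨⟨x, hx, hgx⟩, y, hy, hgy⟩ := hcon
  obtain ⟨z, hz, hgz⟩ := hs.intermediate_value hx hy hg ⟨hgx.le, hgy.le⟩
  exact h0 z hz hgz

theorem monotoneOn_or_antitoneOn {g' : ℝ → ℝ} (hs : Convex ℝ s)
    (hg : ∀ x ∈ s, HasDerivWithinAt g (g' x) s x) (hg' : SingleSignedOn g' s) :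
    MonotoneOn g s ∨ AntitoneOn g s :=
  have hgc : ContinuousOn g s := fun x hx => (hg x hx).continuousWithinAt
  have hgi : ∀ x ∈ interior s, HasDerivWithinAt g (g' x) (interior s) x :=
    fun x hx => (hg x (interior_subset hx)).mono interior_subset
  hg'.imp
    (fun H => monotoneOn_of_hasDerivWithinAt_nonneg hs hgc hgi fun x hx => H x (interior_subset hx))
    fun H => antitoneOn_of_hasDerivWithinAt_nonpos hs hgc hgi fun x hx => H x (interior_subset hx)

theorem integral_abs_deriv_le {u u' : ℝ → ℝ} {c d U : ℝ} (hcd : c ≤ d)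
    (hu : ∀ x ∈ Icc c d, HasDerivWithinAt u (u' x) (Icc c d) x)
    (hu' : ContinuousOn u' (Icc c d)) (hs : SingleSignedOn u' (Icc c d))
    (hU : ∀ x ∈ Icc c d, |u x| ≤ U) : ∫ x in c..d, |u' x| ≤ 2 * U := by
  have ftc : ∫ x in c..d, u' x = u d - u c :=
    integral_eq_sub_of_hasDerivAt_of_le hcd (fun x hx => (hu x hx).continuousWithinAt)
      (fun x hx => (hu x (Ioo_subset_Icc_self hx)).hasDerivAt (Icc_mem_nhds hx.1 hx.2))
      (hu'.intervalIntegrable_of_Icc hcd)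
  have hc := abs_le.1 (hU c (left_mem_Icc.2 hcd))
  have hd := abs_le.1 (hU d (right_mem_Icc.2 hcd))
  rw [← uIcc_of_le hcd] at hs
  rcases hs with hs | hs
  · rw [integral_congr fun x hx => abs_of_nonneg (hs x hx), ftc]
    linarith
  · rw [integral_congr fun x hx => abs_of_nonpos (hs x hx), intervalIntegral.integral_neg, ftc]
    linarith

end SingleSignedOn

end SingleSigned

section Splitting

open Set Polynomial

/-- `[a, b]` is a union of at most `n` consecutive compact intervals `[c, d]`, each with
`q c d`. -/
inductive SplitsInto (q : ℝ → ℝ → Prop) : ℕ → ℝ → ℝ → Prop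
  | single {n : ℕ} {a b : ℝ} (h : q a b) : SplitsInto q (n + 1) a b
  | append {m n : ℕ} {a c b : ℝ} (hac : a ≤ c) (hcb : c ≤ b) (h₁ : SplitsInto q m a c)
      (h₂ : SplitsInto q n c b) : SplitsInto q (m + n) a b

namespace SplitsInto

variable {p q : ℝ → ℝ → Prop} {m n : ℕ} {a b : ℝ}

theorem mono_right (h : SplitsInto q m a b) (hmn : m ≤ n) : SplitsInto q n a b := by
  induction h generalizing n with
  | single h =>
    obtain ⟨k, rfl⟩ := Nat.exists_eq_add_of_lt hmn
    exact .single h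
  | @append m₁ m₂ _ _ _ hac hcb _ _ ih₁ ih₂ =>
    obtain ⟨k, rfl⟩ := Nat.exists_eq_add_of_le hmn
    rw [add_assoc]
    exact .append hac hcb (ih₁ le_rfl) (ih₂ (Nat.le_add_right _ _))

theorem bind (h : SplitsInto p m a b) (hab : a ≤ b)
    (hpq : ∀ c d, c ≤ d → Icc c d ⊆ Icc a b → p c d → SplitsInto q n c d) :
    SplitsInto q (m * n) a b := by
  induction h with
  | single h =>
    exact (hpq _ _ hab subset_rfl h).mono_right (Nat.le_mul_of_pos_left n (Nat.succ_pos _))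
  | append hac hcb _ _ ih₁ ih₂ =>
    rw [add_mul]
    exact .append hac hcb
      (ih₁ hac fun c d hcd hs => hpq c d hcd (hs.trans (Icc_subset_Icc_right hcb)))
      (ih₂ hcb fun c d hcd hs => hpq c d hcd (hs.trans (Icc_subset_Icc_left hac)))

theorem norm_integral_le {E : Type*} [NormedAddCommGroup E] [NormedSpace ℝ E] {g : ℝ → E} {M : ℝ}
    (h : SplitsInto q n a b) (hab : a ≤ b) (hg : ContinuousOn g (Icc a b)) (hM : 0 ≤ M)
    (hq : ∀ c d, c ≤ d → Icc c d ⊆ Icc a b → q c d → ‖∫ x in c..d, g x‖ ≤ M) :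
    ‖∫ x in a..b, g x‖ ≤ n * M := by
  induction h with
  | @single n _ _ h =>
    refine (hq _ _ hab subset_rfl h).trans (le_mul_of_one_le_left hM ?_)
    exact_mod_cast Nat.succ_pos n
  | @append m n a c b hac hcb _ _ ih₁ ih₂ =>
    have hs₁ : Icc a c ⊆ Icc a b := Icc_subset_Icc_right hcb
    have hs₂ : Icc c b ⊆ Icc a b := Icc_subset_Icc_left hac
    rw [← intervalIntegral.integral_add_adjacent_intervals
      ((hg.mono hs₁).intervalIntegrable_of_Icc hac) ((hg.mono hs₂).intervalIntegrable_of_Icc hcb),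
      Nat.cast_add, add_mul]
    exact (norm_add_le _ _).trans (add_le_add
      (ih₁ hac (hg.mono hs₁) fun c d hcd hs => hq c d hcd (hs.trans hs₁))
      (ih₂ hcb (hg.mono hs₂) fun c d hcd hs => hq c d hcd (hs.trans hs₂)))

end SplitsInto

variable {g : ℝ → ℝ} {a b : ℝ}

theorem splitsInto_singleSignedOn_sub_const (hg : ContinuousOn g (Icc a b))
    (hmono : MonotoneOn g (Icc a b) ∨ AntitoneOn g (Icc a b)) (v : ℝ) :
    SplitsInto (fun c d => SingleSignedOn (fun x => g x - v) (Icc c d)) 2 a b := by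
  by_cases hv : ∃ t ∈ Icc a b, g t = v
  · obtain ⟨t, ht, rfl⟩ := hv
    have left_mem {x} (hx : x ∈ Icc a t) : x ∈ Icc a b := ⟨hx.1, hx.2.trans ht.2⟩
    have right_mem {x} (hx : x ∈ Icc t b) : x ∈ Icc a b := ⟨ht.1.trans hx.1, hx.2⟩
    refine .append (m := 1) (n := 1) ht.1 ht.2 (.single ?_) (.single ?_) <;>
      rcases hmono with hmono | hmono
    · exact .inr fun x hx => sub_nonpos.2 (hmono (left_mem hx) ht hx.2)
    · exact .inl fun x hx => sub_nonneg.2 (hmono (left_mem hx) ht hx.2)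
    · exact .inl fun x hx => sub_nonneg.2 (hmono ht (right_mem hx) hx.1)
    · exact .inr fun x hx => sub_nonpos.2 (hmono ht (right_mem hx) hx.1)
  · push Not at hv
    exact .single (.of_ne_zero isPreconnected_Icc (hg.sub continuousOn_const)
      fun x hx => sub_ne_zero.2 (hv x hx))

theorem splitsInto_singleSignedOn_eval (hab : a ≤ b) (hg : ContinuousOn g (Icc a b))
    (hmono : MonotoneOn g (Icc a b) ∨ AntitoneOn g (Icc a b)) {n : ℕ} {R : ℝ[X]}
    (hR : R.natDegree ≤ n) :
    SplitsInto (fun c d => SingleSignedOn (fun x => R.eval (g x)) (Icc c d)) (2 ^ n) a b := by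
  induction n generalizing R with
  | zero =>
    rw [eq_C_of_natDegree_le_zero hR]
    simp only [eval_C]
    exact .single ((le_total 0 (R.coeff 0)).imp (fun h _ _ => h) fun h _ _ => h)
  | succ n ih =>
    by_cases hroot : ∃ r, R.IsRoot r
    · obtain ⟨r, hr⟩ := hroot
      have hdeg : (R /ₘ (X - C r)).natDegree ≤ n := by
        rw [natDegree_divByMonic R (monic_X_sub_C r), natDegree_X_sub_C]
        lia
      refine (ih hdeg).bind hab fun c d hcd hs hquot => ?_
      refine (splitsInto_singleSignedOn_sub_const (hg.mono hs)
        (hmono.imp (·.mono hs) (·.mono hs)) r).bind (n := 1) hcd fun c' d' _ hs' hlin => .single ?_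
      rw [← mul_divByMonic_eq_iff_isRoot.2 hr]
      simpa only [eval_mul, eval_sub, eval_X, eval_C] using hlin.mul (hquot.mono hs')
    · push Not at hroot
      exact (SplitsInto.single (n := 0) (.of_ne_zero isPreconnected_Icc
        (R.continuous.comp_continuousOn hg) fun x _ => hroot (g x))).mono_right Nat.one_le_two_pow

theorem splitsInto_abs_eval_le_or_le (hab : a ≤ b) (hg : ContinuousOn g (Icc a b))
    (hmono : MonotoneOn g (Icc a b) ∨ AntitoneOn g (Icc a b)) {n : ℕ} {R : ℝ[X]}
    (hR : R.natDegree ≤ n) {v : ℝ} (hv : 0 ≤ v) :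
    SplitsInto (fun c d => (∀ x ∈ Icc c d, |R.eval (g x)| ≤ v) ∨ ∀ x ∈ Icc c d, v ≤ |R.eval (g x)|)
      (2 ^ (2 * n)) a b := by
  have hdeg : (R ^ 2 - C (v ^ 2)).natDegree ≤ 2 * n := by
    rw [natDegree_sub_C, natDegree_pow]
    lia
  refine ((splitsInto_singleSignedOn_eval hab hg hmono hdeg).bind (n := 1) hab
    fun c d _ _ h => .single ?_).mono_right (mul_one _).le
  simp only [SingleSignedOn, eval_sub, eval_pow, eval_C, sub_nonneg, sub_nonpos] at h
  exact h.symm.imp (fun H x hx => abs_le_of_sq_le_sq (H x hx) hv)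
    fun H x hx => abs_of_nonneg hv ▸ sq_le_sq.1 (H x hx)

theorem splitsInto_singleSignedOn_of_iteratedDerivWithin (hab : a < b) {n : ℕ}
    (hg : ContDiffOn ℝ n g (Icc a b))
    (hn : SingleSignedOn (iteratedDerivWithin n g (Icc a b)) (Icc a b)) :
    SplitsInto (fun c d => SingleSignedOn g (Icc c d)) (2 ^ n) a b := by
  induction n generalizing g with
  | zero => exact .single (by simpa only [iteratedDerivWithin_zero] using hn)
  | succ n ih =>
    have hu : UniqueDiffOn ℝ (Icc a b) := uniqueDiffOn_Icc hab
    have hderiv : ∀ x ∈ Icc a b, HasDerivWithinAt g (derivWithin g (Icc a b) x) (Icc a b) x :=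
      fun x hx => (hg.differentiableOn (by simp) x hx).hasDerivWithinAt
    refine (ih (hg.derivWithin hu le_rfl) ?_).bind hab.le fun c d _ hs h => ?_
    · rwa [← iteratedDerivWithin_succ']
    · have := splitsInto_singleSignedOn_sub_const (hg.continuousOn.mono hs)
        (h.monotoneOn_or_antitoneOn (convex_Icc c d) fun x hx => (hderiv x (hs hx)).mono hs) 0
      simpa only [sub_zero] using this

end Splitting

section Oscillation

open Set intervalIntegral
open Complex (exp I)

variable {F F' g g' : ℝ → ℝ} {c d lam : ℝ}

theorem norm_exp_I_mul_mul (s t : ℝ) : ‖exp (I * (s : ℂ) * (t : ℂ))‖ = 1 := by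
  rw [mul_assoc, ← Complex.ofReal_mul, Complex.norm_exp_I_mul_ofReal]

theorem norm_integral_exp_le_sub (hcd : c ≤ d) :
    ‖∫ x in c..d, exp (I * (lam : ℂ) * (F x : ℂ))‖ ≤ d - c := by
  have := norm_integral_le_of_norm_le_const (a := c) (b := d) (C := 1)
    fun x _ => (norm_exp_I_mul_mul lam (F x)).le
  rwa [one_mul, abs_of_nonneg (sub_nonneg.2 hcd)] at this

theorem norm_integral_exp_le_of_mul_deriv_eq_one (hcd : c ≤ d) (hlam : lam ≠ 0)
    (hF : ∀ x ∈ Icc c d, HasDerivWithinAt F (F' x) (Icc c d) x)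
    (hg : ∀ x ∈ Icc c d, HasDerivWithinAt g (g' x) (Icc c d) x)
    (hg' : ContinuousOn g' (Icc c d)) (hgF : ∀ x ∈ Icc c d, g x * F' x = 1) :
    ‖∫ x in c..d, exp (I * (lam : ℂ) * (F x : ℂ))‖ ≤
      (|g c| + |g d| + ∫ x in c..d, |g' x|) / |lam| := by
  set e : ℝ → ℂ := fun x => exp (I * (lam : ℂ) * (F x : ℂ))
  have he_norm (x) : ‖e x‖ = 1 := norm_exp_I_mul_mul lam (F x)
  have hF'_eq : ∀ x ∈ Icc c d, F' x = (g x)⁻¹ := fun x hx => eq_inv_of_mul_eq_one_right (hgF x hx)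
  have hF'c : ContinuousOn F' (Icc c d) :=
    (ContinuousOn.inv₀ (fun x hx => (hg x hx).continuousWithinAt)
      fun x hx => left_ne_zero_of_mul_eq_one (hgF x hx)).congr hF'_eq
  have he : ∀ x ∈ Icc c d, HasDerivWithinAt e (e x * (I * lam * F' x)) (Icc c d) x :=
    fun x hx => ((hF x hx).ofReal_comp.const_mul (I * (lam : ℂ))).cexp
  have he'c : ContinuousOn (fun x => e x * (I * lam * F' x)) (Icc c d) :=
    ContinuousOn.mul (fun x hx => (he x hx).continuousWithinAt)
      (continuousOn_const.mul (Complex.continuous_ofReal.comp_continuousOn hF'c))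
  have hg'c : ContinuousOn (fun x => (g' x : ℂ)) (Icc c d) :=
    Complex.continuous_ofReal.comp_continuousOn hg'
  -- Integration by parts, writing `e = g * e' / (I * lam)`.
  have by_parts := integral_mul_deriv_eq_deriv_mul_of_hasDerivWithinAt
    (u := fun x => (g x : ℂ)) (v := e) (a := c) (b := d)
    (by simpa only [uIcc_of_le hcd] using fun x hx => (hg x hx).ofReal_comp)
    (by simpa only [uIcc_of_le hcd] using he) (hg'c.intervalIntegrable_of_Icc hcd)
    (he'c.intervalIntegrable_of_Icc hcd)
  have hlhs : ∫ x in c..d, (g x : ℂ) * (e x * (I * lam * F' x)) = I * lam * ∫ x in c..d, e x := by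
    rw [← intervalIntegral.integral_const_mul]
    refine integral_congr fun x hx => ?_
    have : (g x : ℂ) * F' x = 1 := mod_cast hgF x (uIcc_of_le hcd ▸ hx)
    linear_combination e x * (I * lam) * this
  have hrest : ‖∫ x in c..d, (g' x : ℂ) * e x‖ ≤ ∫ x in c..d, |g' x| :=
    (intervalIntegral.norm_integral_le_integral_norm hcd).trans_eq (by
      simp only [norm_mul, he_norm, mul_one, Complex.norm_real, Real.norm_eq_abs])
  have hlam' : ‖I * (lam : ℂ)‖ = |lam| := by simp
  rw [le_div_iff₀ (abs_pos.2 hlam), mul_comm, ← hlam', ← norm_mul, ← hlhs, by_parts]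
  refine (norm_sub_le _ _).trans (add_le_add ((norm_sub_le _ _).trans_eq ?_) hrest)
  simp only [norm_mul, he_norm, mul_one, Complex.norm_real, Real.norm_eq_abs, add_comm]

theorem integral_abs_deriv_mul_le {u u' v v' : ℝ → ℝ} {U V : ℝ} (hcd : c ≤ d)
    (hu : ∀ x ∈ Icc c d, HasDerivWithinAt u (u' x) (Icc c d) x)
    (hv : ∀ x ∈ Icc c d, HasDerivWithinAt v (v' x) (Icc c d) x)
    (hu' : ContinuousOn u' (Icc c d)) (hv' : ContinuousOn v' (Icc c d))
    (hus : SingleSignedOn u' (Icc c d)) (hvs : SingleSignedOn v' (Icc c d))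
    (hU : ∀ x ∈ Icc c d, |u x| ≤ U) (hV : ∀ x ∈ Icc c d, |v x| ≤ V) :
    ∫ x in c..d, |u' x * v x + u x * v' x| ≤ 4 * (U * V) := by
  have hU0 : 0 ≤ U := (abs_nonneg _).trans (hU c (left_mem_Icc.2 hcd))
  have hV0 : 0 ≤ V := (abs_nonneg _).trans (hV c (left_mem_Icc.2 hcd))
  have huc : ContinuousOn u (Icc c d) := fun x hx => (hu x hx).continuousWithinAt
  have hvc : ContinuousOn v (Icc c d) := fun x hx => (hv x hx).continuousWithinAt
  have hpointwise : ∀ x ∈ Icc c d, |u' x * v x + u x * v' x| ≤ V * |u' x| + U * |v' x| := by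
    intro x hx
    refine (abs_add_le _ _).trans ?_
    rw [abs_mul, abs_mul, mul_comm |u' x|]
    gcongr
    · exact hV x hx
    · exact hU x hx
  have hu'i : IntervalIntegrable (fun x => V * |u' x|) volume c d :=
    (hu'.abs.intervalIntegrable_of_Icc hcd).const_mul V
  have hv'i : IntervalIntegrable (fun x => U * |v' x|) volume c d :=
    (hv'.abs.intervalIntegrable_of_Icc hcd).const_mul U
  calc ∫ x in c..d, |u' x * v x + u x * v' x|
      ≤ ∫ x in c..d, (V * |u' x| + U * |v' x|) := integral_mono_on hcd
        (((hu'.mul hvc).add (huc.mul hv')).abs.intervalIntegrable_of_Icc hcd)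
        (hu'i.add hv'i) hpointwise
    _ = V * (∫ x in c..d, |u' x|) + U * ∫ x in c..d, |v' x| := by
        rw [intervalIntegral.integral_add hu'i hv'i, intervalIntegral.integral_const_mul,
          intervalIntegral.integral_const_mul]
    _ ≤ V * (2 * U) + U * (2 * V) := by
        gcongr
        · exact hus.integral_abs_deriv_le hcd hu hu' hU
        · exact hvs.integral_abs_deriv_le hcd hv hv' hV
    _ = 4 * (U * V) := by ring

theorem SingleSignedOn.neg_div_sq {p' p : ℝ → ℝ} {s : Set ℝ} (h : SingleSignedOn p' s) :
    SingleSignedOn (fun x => -p' x / p x ^ 2) s :=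
  h.symm.imp (fun H x hx => div_nonneg (neg_nonneg.2 (H x hx)) (sq_nonneg _))
    fun H x hx => div_nonpos_of_nonpos_of_nonneg (neg_nonpos.2 (H x hx)) (sq_nonneg _)

theorem norm_integral_exp_le_of_deriv_eq_mul {p p' q q' : ℝ → ℝ} {τ μ : ℝ} (hcd : c ≤ d)
    (hlam : lam ≠ 0) (hτ : 0 < τ) (hμ : 0 < μ)
    (hF : ∀ x ∈ Icc c d, HasDerivWithinAt F (p x * q x) (Icc c d) x)
    (hp : ∀ x ∈ Icc c d, HasDerivWithinAt p (p' x) (Icc c d) x)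
    (hq : ∀ x ∈ Icc c d, HasDerivWithinAt q (q' x) (Icc c d) x)
    (hp' : ContinuousOn p' (Icc c d)) (hq' : ContinuousOn q' (Icc c d))
    (hps : SingleSignedOn p' (Icc c d)) (hqs : SingleSignedOn q' (Icc c d))
    (hpτ : ∀ x ∈ Icc c d, τ ≤ |p x|) (hqμ : ∀ x ∈ Icc c d, μ ≤ |q x|) :
    ‖∫ x in c..d, exp (I * (lam : ℂ) * (F x : ℂ))‖ ≤ 6 / (τ * μ * |lam|) := by
  have hp0 : ∀ x ∈ Icc c d, p x ≠ 0 := fun x hx => abs_pos.1 (hτ.trans_le (hpτ x hx))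
  have hq0 : ∀ x ∈ Icc c d, q x ≠ 0 := fun x hx => abs_pos.1 (hμ.trans_le (hqμ x hx))
  have hpc : ContinuousOn p (Icc c d) := fun x hx => (hp x hx).continuousWithinAt
  have hqc : ContinuousOn q (Icc c d) := fun x hx => (hq x hx).continuousWithinAt
  have hpinv := fun x hx => (hp x hx).fun_inv (hp0 x hx)
  have hqinv := fun x hx => (hq x hx).fun_inv (hq0 x hx)
  have hpinv' : ContinuousOn (fun x => -p' x / p x ^ 2) (Icc c d) :=
    hp'.neg.div (hpc.pow 2) fun x hx => pow_ne_zero 2 (hp0 x hx)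
  have hqinv' : ContinuousOn (fun x => -q' x / q x ^ 2) (Icc c d) :=
    hq'.neg.div (hqc.pow 2) fun x hx => pow_ne_zero 2 (hq0 x hx)
  have hpU : ∀ x ∈ Icc c d, |(p x)⁻¹| ≤ τ⁻¹ := fun x hx =>
    (abs_inv (p x)).trans_le (inv_anti₀ hτ (hpτ x hx))
  have hqV : ∀ x ∈ Icc c d, |(q x)⁻¹| ≤ μ⁻¹ := fun x hx =>
    (abs_inv (q x)).trans_le (inv_anti₀ hμ (hqμ x hx))
  have hend : ∀ x ∈ Icc c d, |(p x)⁻¹ * (q x)⁻¹| ≤ τ⁻¹ * μ⁻¹ := fun x hx => by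
    rw [abs_mul]
    exact mul_le_mul (hpU x hx) (hqV x hx) (abs_nonneg _) (inv_nonneg.2 hτ.le)
  have hvar := integral_abs_deriv_mul_le hcd hpinv hqinv hpinv' hqinv' hps.neg_div_sq
    hqs.neg_div_sq hpU hqV
  calc ‖∫ x in c..d, exp (I * (lam : ℂ) * (F x : ℂ))‖
      ≤ (τ⁻¹ * μ⁻¹ + τ⁻¹ * μ⁻¹ + 4 * (τ⁻¹ * μ⁻¹)) / |lam| := by
        refine (norm_integral_exp_le_of_mul_deriv_eq_one hcd hlam hF
          (fun x hx => (hpinv x hx).mul (hqinv x hx)) ?_ fun x hx => ?_).trans ?_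
        · exact (hpinv'.mul (hqc.inv₀ hq0)).add ((hpc.inv₀ hp0).mul hqinv')
        · rw [Pi.mul_apply, ← mul_inv, inv_mul_cancel₀ (mul_ne_zero (hp0 x hx) (hq0 x hx))]
        · gcongr
          · exact hend c (left_mem_Icc.2 hcd)
          · exact hend d (right_mem_Icc.2 hcd)
    _ = 6 / (τ * μ * |lam|) := by
        field_simp
        norm_num

end Oscillation

section SmallBall

open Set Metric ProbabilityTheory
open Complex (exp I)

theorem integrable_abs_rpow_gaussianReal {v : NNReal} (hv : v ≠ 0) {s : ℝ} (hs : -1 < s) :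
    Integrable (fun t : ℝ => |t| ^ s) (gaussianReal 0 v) := by
  have hb : (0 : ℝ) < (2 * (v : ℝ))⁻¹ := by positivity
  have hint : Integrable (fun t : ℝ => |t| ^ s * Real.exp (-(2 * v : ℝ)⁻¹ * |t| ^ 2)) :=
    (integrable_fun_norm_addHaar (volume : Measure ℝ)
      (f := fun r => r ^ s * Real.exp (-(2 * v : ℝ)⁻¹ * r ^ 2))).2 (by
        simpa only [Module.finrank_self, tsub_self, pow_zero, one_smul]
          using integrableOn_rpow_mul_exp_neg_mul_sq hb hs)
  rw [gaussianReal_of_var_ne_zero 0 hv, integrable_withDensity_iff_integrable_smul'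
    (measurable_gaussianPDF 0 v) (ae_of_all _ fun _ => gaussianPDF_lt_top)]
  refine (hint.const_mul (√(2 * Real.pi * v))⁻¹).congr (ae_of_all _ fun t => ?_)
  have hexp : -(2 * v : ℝ)⁻¹ * |t| ^ 2 = -(t - 0) ^ 2 / (2 * v) := by
    rw [sq_abs, sub_zero, neg_mul, neg_div, inv_mul_eq_div]
  simp only [toReal_gaussianPDF, gaussianPDFReal, smul_eq_mul, hexp]
  ring

theorem integral_charFun_comm {E : Type*} [NormedAddCommGroup E] [InnerProductSpace ℝ E]
    [MeasurableSpace E] [OpensMeasurableSpace E] [SecondCountableTopology E]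
    (μ ν : Measure E) [IsFiniteMeasure μ] [IsFiniteMeasure ν] :
    ∫ t, charFun μ t ∂ν = ∫ t, charFun ν t ∂μ := by
  have hint : Integrable (Function.uncurry fun t x : E => exp ((inner ℝ x t : ℝ) * I))
      (ν.prod μ) := by
    refine Integrable.of_bound (C := 1) (Continuous.aestronglyMeasurable (by fun_prop))
      (ae_of_all _ fun z => ?_)
    rw [Function.uncurry, Complex.norm_exp_ofReal_mul_I]
  simp only [charFun_apply]
  rw [integral_integral_swap hint]
  simp only [real_inner_comm]

-- The Gaussian is the Fourier transform of a Gaussian and is bounded below on the unit ball.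
theorem measureReal_closedBall_zero_one_le (ν : Measure ℝ) [IsFiniteMeasure ν] :
    ν.real (closedBall 0 1) ≤ Real.exp (1 / 2) * ∫ t, ‖charFun ν t‖ ∂(gaussianReal 0 1) := by
  have hcf (x : ℝ) : charFun (gaussianReal 0 1) x = (Real.exp (-x ^ 2 / 2) : ℂ) := by
    rw [charFun_gaussianReal]
    push_cast
    congr 1
    ring
  have hmean : ∫ x, Real.exp (-x ^ 2 / 2) ∂ν ≤ ∫ t, ‖charFun ν t‖ ∂(gaussianReal 0 1) := by
    refine le_trans ?_ (norm_integral_le_integral_norm _)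
    rw [integral_charFun_comm]
    simp only [hcf]
    rw [integral_complex_ofReal, Complex.norm_real]
    exact le_abs_self _
  have hint : Integrable (fun x : ℝ => Real.exp (-x ^ 2 / 2)) ν := by
    refine Integrable.of_bound (C := 1) (Continuous.aestronglyMeasurable (by fun_prop))
      (ae_of_all _ fun x => ?_)
    rw [Real.norm_eq_abs, Real.abs_exp, Real.exp_le_one_iff]
    nlinarith [sq_nonneg x]
  have hball : ν.real (closedBall 0 1) * Real.exp (-(1 / 2)) ≤ ∫ x, Real.exp (-x ^ 2 / 2) ∂ν := by
    rw [← smul_eq_mul, ← setIntegral_const]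
    refine (setIntegral_mono_on (integrable_const _).integrableOn hint.integrableOn
      measurableSet_closedBall fun x hx => ?_).trans
      (setIntegral_le_integral hint (ae_of_all _ fun x => (Real.exp_pos _).le))
    rw [mem_closedBall_zero_iff, Real.norm_eq_abs] at hx
    exact Real.exp_le_exp.2 (by linarith [(sq_le_one_iff_abs_le_one x).2 hx])
  rw [Real.exp_neg, ← div_eq_mul_inv, div_le_iff₀' (Real.exp_pos _)] at hball
  exact hball.trans (mul_le_mul_of_nonneg_left hmean (Real.exp_pos _).le)

theorem exists_measureReal_closedBall_le_of_norm_charFun_le {δ : ℝ} (hδ1 : δ < 1) :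
    ∃ C : ℝ, 0 < C ∧ ∀ (ν : Measure ℝ) [IsFiniteMeasure ν] (A : ℝ),
      (∀ t, t ≠ 0 → ‖charFun ν t‖ ≤ A * |t| ^ (-δ)) →
      ∀ y ε : ℝ, 0 < ε → ν.real (closedBall y ε) ≤ C * A * ε ^ δ := by
  set G : ℝ := ∫ t, |t| ^ (-δ) ∂(gaussianReal 0 1)
  have : 0 ≤ G := integral_nonneg fun t => by positivity
  refine ⟨Real.exp (1 / 2) * (G + 1), by positivity, fun ν _ A hdecay y ε hε => ?_⟩
  have hA : 0 ≤ A := by simpa using (norm_nonneg _).trans (hdecay 1 one_ne_zero)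
  set ν' : Measure ℝ := (ν.map (· + -y)).map (ε⁻¹ * ·)
  have hmap : ν.real (closedBall y ε) = ν'.real (closedBall 0 1) := by
    rw [map_measureReal_apply (by fun_prop) measurableSet_closedBall,
      map_measureReal_apply (by fun_prop) (measurableSet_closedBall.preimage (by fun_prop))]
    congr 1
    ext x
    simp [Real.dist_eq, abs_of_pos hε, inv_mul_le_iff₀ hε, ← sub_eq_add_neg]
  have hbound : ∀ t, t ≠ 0 → ‖charFun ν' t‖ ≤ A * ε ^ δ * |t| ^ (-δ) := fun t ht => by
    rw [charFun_map_mul, charFun_map_add_const, norm_mul, Complex.norm_exp_ofReal_mul_I, mul_one]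
    refine (hdecay _ (mul_ne_zero (inv_ne_zero hε.ne') ht)).trans_eq ?_
    rw [abs_mul, abs_of_pos (inv_pos.2 hε), Real.mul_rpow (inv_pos.2 hε).le (abs_nonneg t),
      Real.inv_rpow hε.le, Real.rpow_neg hε.le, inv_inv, mul_assoc]
  have hmean : ∫ t, ‖charFun ν' t‖ ∂(gaussianReal 0 1) ≤ A * ε ^ δ * G := by
    rw [← integral_const_mul]
    refine integral_mono_of_nonneg (ae_of_all _ fun _ => norm_nonneg _)
      ((integrable_abs_rpow_gaussianReal one_ne_zero (by linarith)).const_mul _) ?_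
    have : NullSingletonClass (gaussianReal 0 1) := nullSingletonClass_gaussianReal one_ne_zero
    filter_upwards [Measure.ae_ne (gaussianReal 0 1) 0] with t ht using hbound t ht
  calc ν.real (closedBall y ε)
      ≤ Real.exp (1 / 2) * (A * ε ^ δ * G) := by
        rw [hmap]
        exact (measureReal_closedBall_zero_one_le ν').trans
          (mul_le_mul_of_nonneg_left hmean (Real.exp_pos _).le)
    _ ≤ Real.exp (1 / 2) * (A * ε ^ δ * (G + 1)) := by gcongr; linarith
    _ = Real.exp (1 / 2) * (G + 1) * A * ε ^ δ := by ring

theorem exists_length_le_of_norm_integral_exp_le {δ : ℝ} (hδ1 : δ < 1) :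
    ∃ L : ℝ, 0 < L ∧ ∀ (a b : ℝ) (f : ℝ → ℝ), ContinuousOn f (Icc a b) → ∀ A : ℝ,
      (∀ lam : ℝ, lam ≠ 0 →
        ‖∫ x in Icc a b, exp (I * (lam : ℂ) * (f x : ℂ))‖ ≤ A * |lam| ^ (-δ)) →
      ∀ c d, c ≤ d → Icc c d ⊆ Icc a b → ∀ y ε, 0 < ε →
        MapsTo f (Icc c d) (closedBall y ε) → d - c ≤ L * A * ε ^ δ := by
  obtain ⟨L, hL, hball⟩ := exists_measureReal_closedBall_le_of_norm_charFun_le hδ1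
  refine ⟨L, hL, fun a b f hf A hdecay c d hcd hs y ε hε hmaps => ?_⟩
  have hfm : AEMeasurable f (volume.restrict (Icc a b)) := hf.aemeasurable measurableSet_Icc
  have hchar (t : ℝ) (ht : t ≠ 0) :
      ‖charFun ((volume.restrict (Icc a b)).map f) t‖ ≤ A * |t| ^ (-δ) := by
    rw [charFun_apply_real, integral_map hfm (Continuous.aestronglyMeasurable (by fun_prop))]
    simpa only [mul_comm I, mul_right_comm _ I] using hdecay t ht
  refine le_trans ?_ (hball _ A hchar y ε hε)
  rw [measureReal_def, Measure.map_apply_of_aemeasurable hfm measurableSet_closedBall,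
    ← measureReal_def]
  calc d - c = volume.real (Icc c d) := (Real.volume_real_Icc_of_le hcd).symm
    _ = (volume.restrict (Icc a b)).real (Icc c d) := by
        rw [measureReal_restrict_apply measurableSet_Icc, inter_eq_self_of_subset_left hs]
    _ ≤ _ := measureReal_mono hmaps

end SmallBall

section Jets

open Polynomial

theorem exists_abs_le_mul_of_forall_eq_zero {V ι : Type*} [AddCommGroup V] [Module ℝ V]
    [Finite ι] (S : Submodule ℝ V) (φ : ι → V →ₗ[ℝ] ℝ) (ψ : V →ₗ[ℝ] ℝ)
    (h : ∀ v ∈ S, (∀ i, φ i v = 0) → ψ v = 0) :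
    ∃ C : ℝ, 1 ≤ C ∧ ∀ v ∈ S, ∀ M, 0 ≤ M → (∀ i, |φ i v| ≤ M) → |ψ v| ≤ C * M := by
  have : Fintype ι := Fintype.ofFinite ι
  obtain ⟨c, hc⟩ : ∃ c : ι → ℝ, ∑ i, c i • (φ i).domRestrict S = ψ.domRestrict S := by
    refine (Submodule.mem_span_range_iff_exists_fun ℝ).1 (mem_span_of_iInf_ker_le_ker ?_)
    intro v hv
    simp only [Submodule.mem_iInf, LinearMap.mem_ker, LinearMap.domRestrict_apply] at hv ⊢
    exact h v v.2 hv
  refine ⟨1 + ∑ i, |c i|, le_add_of_nonneg_right (by positivity), fun v hv M hM hφ => ?_⟩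
  have hψ : ψ v = ∑ i, c i * φ i v := by
    simpa using (DFunLike.congr_fun hc ⟨v, hv⟩).symm
  calc |ψ v| ≤ ∑ i, |c i * φ i v| := hψ ▸ Finset.abs_sum_le_sum_abs _ _
    _ ≤ ∑ i, |c i| * M := by
        gcongr with i
        rw [abs_mul]
        exact mul_le_mul_of_nonneg_left (hφ i) (abs_nonneg _)
    _ ≤ (1 + ∑ i, |c i|) * M := by rw [← Finset.sum_mul]; linarith

theorem exists_abs_coeff_le_of_abs_eval_le (m : ℕ) :
    ∃ K : ℝ, 1 ≤ K ∧ ∀ p : ℝ[X], p.natDegree ≤ m → ∀ M,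
      (∀ z ∈ Set.Icc (0 : ℝ) 1, |p.eval z| ≤ M) → ∀ j ≤ m, |p.coeff j| ≤ K * M := by
  set node : Fin (m + 1) → ℝ := fun i => i / (m + 1)
  have hnode_inj : node.Injective := fun i j hij =>
    Fin.ext (Nat.cast_injective ((div_left_inj' (Nat.cast_add_one_ne_zero (R := ℝ) m)).1 hij))
  have hnode_mem (i) : node i ∈ Set.Icc (0 : ℝ) 1 :=
    ⟨by positivity, div_le_one_of_le₀ (mod_cast i.2.le) (by positivity)⟩
  have hzero : ∀ p ∈ degreeLE ℝ m, (∀ i, leval (node i) p = 0) → p = 0 := fun p hp hev =>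
    eq_zero_of_natDegree_lt_card_of_eval_eq_zero p hnode_inj hev (by
      rw [Fintype.card_fin]
      exact Nat.lt_succ_of_le (natDegree_le_iff_degree_le.2 (mem_degreeLE.1 hp)))
  choose K hK1 hK using fun j : Fin (m + 1) =>
    exists_abs_le_mul_of_forall_eq_zero (degreeLE ℝ m) (fun i => leval (node i)) (lcoeff ℝ j)
      fun p hp hev => by rw [hzero p hp hev, map_zero]
  obtain ⟨K', hK'⟩ := Finite.exists_le K
  refine ⟨K', (hK1 0).trans (hK' 0), fun p hp M hM j hj => ?_⟩
  have hM0 : 0 ≤ M := (abs_nonneg _).trans (hM 0 ⟨le_rfl, zero_le_one⟩)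
  exact (hK ⟨j, Nat.lt_succ_of_le hj⟩ p (mem_degreeLE.2 (natDegree_le_iff_degree_le.1 hp)) M hM0
    fun i => hM _ (hnode_mem i)).trans (mul_le_mul_of_nonneg_right (hK' _) hM0)

theorem eq_zero_of_X_pow_dvd_of_X_pow_dvd_taylor_one {R : Type*} [CommRing R] [IsDomain R]
    {p : R[X]} {k l : ℕ} (hp : X ^ k ∣ p) (hp1 : X ^ l ∣ taylor 1 p)
    (hdeg : p.natDegree < k + l) : p = 0 := by
  rw [taylor_apply, ← X_sub_C_pow_dvd_iff] at hp1
  have hcop : IsCoprime (X : R[X]) (X - C 1) := ⟨1, -1, by rw [C_1]; ring⟩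
  refine eq_zero_of_dvd_of_natDegree_lt ((hcop.pow (m := k) (n := l)).mul_dvd hp hp1) ?_
  rwa [natDegree_mul (pow_ne_zero _ X_ne_zero) (pow_ne_zero _ (X_sub_C_ne_zero 1)),
    natDegree_X_pow, natDegree_pow, natDegree_X_sub_C, mul_one]

-- Hermite interpolation at `0` and `1`, with constants obtained from finite dimensionality.
theorem exists_abs_coeff_le_of_abs_coeff_taylor_one_le (m : ℕ) :
    ∃ H : ℝ, 1 ≤ H ∧ ∀ k ≤ m, ∀ p : ℝ[X], p.natDegree ≤ m → ∀ M, 0 ≤ M →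
      (∀ l < k, |p.coeff l| ≤ M) → (∀ j ≤ m - k, |(taylor 1 p).coeff j| ≤ M) →
      |p.coeff k| ≤ H * M := by
  choose H hH1 hH using fun k : Fin (m + 1) =>
    exists_abs_le_mul_of_forall_eq_zero (degreeLE ℝ m)
      (Sum.elim (fun l : Fin k => lcoeff ℝ l)
        fun j : Fin (m - k + 1) => (lcoeff ℝ j).comp (taylor 1))
      (lcoeff ℝ k) fun p hp hzero => by
        have hp0 : X ^ (k : ℕ) ∣ p := X_pow_dvd_iff.2 fun l hl => hzero (.inl ⟨l, hl⟩)
        have hp1 : X ^ (m - k + 1) ∣ taylor 1 p :=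
          X_pow_dvd_iff.2 fun j hj => hzero (.inr ⟨j, hj⟩)
        have hdeg : p.natDegree ≤ m := natDegree_le_iff_degree_le.2 (mem_degreeLE.1 hp)
        rw [eq_zero_of_X_pow_dvd_of_X_pow_dvd_taylor_one hp0 hp1 (by lia), map_zero]
  obtain ⟨H', hH'⟩ := Finite.exists_le H
  refine ⟨H', (hH1 0).trans (hH' 0), fun k hk p hp M hM hlow htaylor => ?_⟩
  refine (hH ⟨k, Nat.lt_succ_of_le hk⟩ p (mem_degreeLE.2 (natDegree_le_iff_degree_le.1 hp)) M hM
    ?_).trans (mul_le_mul_of_nonneg_right (hH' _) hM)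
  rintro (l | j)
  · exact hlow l l.2
  · exact htaylor j (Nat.le_of_lt_succ j.2)

theorem abs_coeff_taylor_le {p : ℝ[X]} {m k : ℕ} {M R r : ℝ} (hp : p.natDegree ≤ m)
    (hM0 : 0 ≤ M) (hM : ∀ i ≥ k, |p.coeff i| ≤ M) (hr : |r| ≤ R) (hR : 1 ≤ R) :
    |(taylor r p).coeff k| ≤ (m + 1) * (2 ^ m * R ^ m * M) := by
  have hterm : ∀ i ∈ Finset.range (m + 1),
      |(hasseDeriv k p).coeff i * r ^ i| ≤ 2 ^ m * R ^ m * M := by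
    intro i _
    rw [hasseDeriv_coeff]
    by_cases hik : i + k ≤ m
    · have hchoose : ((i + k).choose k : ℝ) ≤ 2 ^ m :=
        mod_cast (Nat.choose_le_two_pow _ _).trans (Nat.pow_le_pow_right two_pos hik)
      have hpow : |r| ^ i ≤ R ^ m :=
        (pow_le_pow_left₀ (abs_nonneg r) hr i).trans (pow_le_pow_right₀ hR (by lia))
      rw [abs_mul, abs_mul, abs_pow, Nat.abs_cast, mul_right_comm]
      gcongr
      exact hM _ (Nat.le_add_left k i)
    · rw [coeff_eq_zero_of_natDegree_lt (n := i + k) (by lia), mul_zero, zero_mul, abs_zero]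
      positivity
  have hdeg : (hasseDeriv k p).natDegree < m + 1 :=
    Nat.lt_succ_of_le ((natDegree_hasseDeriv_le p k).trans (by lia))
  rw [taylor_coeff, eval_eq_sum_range' hdeg]
  refine (Finset.abs_sum_le_sum_abs _ _).trans ((Finset.sum_le_sum hterm).trans_eq ?_)
  rw [Finset.sum_const, Finset.card_range, nsmul_eq_mul, Nat.cast_succ]

end Jets

section SND

open Polynomial

variable {Q : ℝ[X]} {m : ℕ} {y : ℝ}

theorem exists_le_abs_coeff_taylor_of_abs_le {k : ℕ} {R : ℝ} (hQ : Q.natDegree ≤ m) (hk : k ≠ 0)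
    (hQk : |Q.coeff k| = 1) (hR : 1 ≤ R) (hy : |y| ≤ R) :
    ∃ j, j ≠ 0 ∧ j ≤ m ∧ 1 / (2 * ((m + 1) * (2 ^ m * R ^ m))) ≤ |(taylor y Q).coeff j| := by
  by_contra! hsmall
  have hbound : ∀ i ≥ k, |(taylor y Q).coeff i| ≤ 1 / (2 * ((m + 1) * (2 ^ m * R ^ m))) := by
    intro i hi
    rcases le_or_gt i m with him | him
    · exact (hsmall i (by lia) him).le
    · rw [coeff_eq_zero_of_natDegree_lt (by rw [natDegree_taylor]; lia), abs_zero]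
      positivity
  have hcoeff := abs_coeff_taylor_le (r := -y) (m := m) (by rwa [natDegree_taylor])
    (by positivity) hbound (by rwa [abs_neg]) hR
  rw [taylor_taylor, neg_add_cancel, taylor_zero, hQk] at hcoeff
  have : ((m : ℝ) + 1) * (2 ^ m * R ^ m * (1 / (2 * ((m + 1) * (2 ^ m * R ^ m))))) = 1 / 2 := by
    field_simp
  linarith

theorem taylor_one_comp_C_mul_X {R : Type*} [CommSemiring R] (p : R[X]) (y : R) :
    taylor 1 (p.comp (C y * X)) = (taylor y p).comp (C y * X) := by
  simp only [taylor_apply, comp_assoc, mul_comp, add_comp, C_comp, X_comp, mul_add, C_1, mul_one]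

theorem natDegree_comp_C_mul_X_le {R : Type*} [Semiring R] (p : R[X]) (y : R) :
    (p.comp (C y * X)).natDegree ≤ p.natDegree :=
  natDegree_comp_le.trans (mul_le_of_le_one_right'
    ((natDegree_C_mul_le _ _).trans natDegree_X_le))

theorem abs_coeff_comp_C_mul_X (p : ℝ[X]) (y : ℝ) (l : ℕ) :
    |(p.comp (C y * X)).coeff l| = |p.coeff l| * |y| ^ l := by
  rw [comp_C_mul_X_coeff, abs_mul, abs_pow]

-- Rescaling by `y` makes the `k`-th coefficient dominate all the lower ones.
theorem exists_le_abs_coeff_taylor_of_le_abs (m : ℕ) :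
    ∃ R : ℝ, 1 ≤ R ∧ ∀ (Q : ℝ[X]) (k : ℕ) (y : ℝ), Q.natDegree ≤ m → k ≠ 0 → k ≤ m → m ≤ 2 * k →
      (∀ i, |Q.coeff i| ≤ 1) → |Q.coeff k| = 1 → |Q.eval y| ≤ 1 → R ≤ |y| →
      ∃ j, j ≠ 0 ∧ j ≤ m ∧ 1 / R ≤ |(taylor y Q).coeff j| := by
  obtain ⟨H, hH1, hH⟩ := exists_abs_coeff_le_of_abs_coeff_taylor_one_le m
  refine ⟨2 * H, by linarith, fun Q k y hdeg hk hkm hmk hQ hQk hQy hy => ?_⟩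
  by_contra! hsmall
  have hy1 : 1 ≤ |y| := by linarith
  have hpow {l : ℕ} (hl : l < k) : |y| ^ l ≤ |y| ^ k / (2 * H) := by
    rw [le_div_iff₀ (by linarith)]
    calc |y| ^ l * (2 * H) ≤ |y| ^ l * |y| := by gcongr
      _ = |y| ^ (l + 1) := (pow_succ _ _).symm
      _ ≤ |y| ^ k := pow_le_pow_right₀ hy1 hl
  have hlow : ∀ l < k, |(Q.comp (C y * X)).coeff l| ≤ |y| ^ k / (2 * H) := fun l hl => by
    rw [abs_coeff_comp_C_mul_X]
    exact (mul_le_of_le_one_left (by positivity) (hQ l)).trans (hpow hl)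
  have htaylor : ∀ j ≤ m - k, |(taylor 1 (Q.comp (C y * X))).coeff j| ≤ |y| ^ k / (2 * H) := by
    intro j hj
    rw [taylor_one_comp_C_mul_X, abs_coeff_comp_C_mul_X]
    rcases eq_or_ne j 0 with rfl | hj0
    · rw [taylor_coeff_zero]
      exact (mul_le_of_le_one_left (by positivity) hQy).trans (hpow (Nat.pos_of_ne_zero hk))
    · calc |(taylor y Q).coeff j| * |y| ^ j ≤ 1 / (2 * H) * |y| ^ k := by
            gcongr
            · exact (hsmall j hj0 (by lia)).le
            · lia
        _ = |y| ^ k / (2 * H) := one_div_mul_eq_div _ _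
  have hcoeff := hH k hkm _ ((natDegree_comp_C_mul_X_le Q y).trans hdeg) _ (by positivity)
    hlow htaylor
  rw [abs_coeff_comp_C_mul_X, hQk, one_mul] at hcoeff
  have hhalf : H * (|y| ^ k / (2 * H)) = |y| ^ k / 2 := by field_simp
  linarith [pow_pos (zero_lt_one.trans_le hy1) k]

theorem IsSND.exists_le_abs_coeff_taylor {m : ℕ} (hm : m ≠ 0) :
    ∃ ε : ℝ, 0 < ε ∧ ∀ Q : ℝ[X], Q.natDegree = m → IsSND Q → ∀ y, |Q.eval y| ≤ 1 →
      ∃ j, j ≠ 0 ∧ j ≤ m ∧ ε ≤ |(taylor y Q).coeff j| := by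
  obtain ⟨R, hR1, hR⟩ := exists_le_abs_coeff_taylor_of_le_abs m
  refine ⟨min (1 / R) (1 / (2 * ((m + 1) * (2 ^ m * R ^ m)))), by positivity, ?_⟩
  rintro Q rfl ⟨hQ, i, hi, hQi⟩ y hQy
  rcases le_total R |y| with hy | hy
  · obtain ⟨j, hj0, hjm, hj⟩ :=
      hR Q (Q.natDegree - i) y le_rfl (by lia) (by lia) (by lia) hQ hQi hQy hy
    exact ⟨j, hj0, hjm, (min_le_left _ _).trans hj⟩
  · obtain ⟨j, hj0, hjm, hj⟩ :=
      exists_le_abs_coeff_taylor_of_abs_le le_rfl (by lia) hQi hR1 hy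
    exact ⟨j, hj0, hjm, (min_le_right _ _).trans hj⟩

theorem IsSND.exists_sub_le {m : ℕ} (hm : m ≠ 0) :
    ∃ K : ℝ, 0 < K ∧ ∀ Q : ℝ[X], Q.natDegree = m → IsSND Q → ∀ σ y z : ℝ, 0 < σ → σ ≤ 1 →
      y ≤ z → (∀ x ∈ Set.Icc y z, |Q.eval x| ≤ σ ^ m) → z - y ≤ K * σ := by
  obtain ⟨ε, hε, hjet⟩ := IsSND.exists_le_abs_coeff_taylor hm
  obtain ⟨K, _, hK⟩ := exists_abs_coeff_le_of_abs_eval_le m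
  refine ⟨max 1 (K / ε), by positivity, fun Q hQm hQ σ y z hσ hσ1 hyz hsmall => ?_⟩
  set h := z - y
  have hh : 0 ≤ h := sub_nonneg.2 hyz
  obtain ⟨j, hj0, hjm, hj⟩ := hjet Q hQm hQ y
    ((hsmall y ⟨le_rfl, hyz⟩).trans (pow_le_one₀ hσ.le hσ1))
  have hdeg : ((taylor y Q).comp (C h * X)).natDegree ≤ m :=
    (natDegree_comp_C_mul_X_le _ _).trans (natDegree_taylor Q y ▸ hQm.le)
  have hunit : ∀ t ∈ Set.Icc (0 : ℝ) 1, |((taylor y Q).comp (C h * X)).eval t| ≤ σ ^ m := by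
    intro t ht
    rw [eval_comp, taylor_eval, eval_C_mul, eval_X]
    refine hsmall _ ⟨le_add_of_nonneg_left (mul_nonneg hh ht.1), ?_⟩
    linarith [mul_le_of_le_one_right hh ht.2]
  have hcoeff := hK _ hdeg _ hunit j hjm
  rw [abs_coeff_comp_C_mul_X, abs_of_nonneg hh] at hcoeff
  refine le_of_pow_le_pow_left₀ hj0 (by positivity) ?_
  calc h ^ j ≤ K / ε * σ ^ m := by
        rw [div_mul_eq_mul_div, le_div_iff₀' hε]
        exact (mul_le_mul_of_nonneg_right hj (pow_nonneg hh j)).trans hcoeff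
    _ ≤ max 1 (K / ε) ^ j * σ ^ j := by
        gcongr ?_ * ?_
        · exact (le_max_right _ _).trans (le_self_pow₀ (le_max_left _ _) hj0)
        · exact pow_le_pow_of_le_one hσ.le hσ1 hjm
    _ = (max 1 (K / ε) * σ) ^ j := (mul_pow _ _ _).symm

end SND

section Pieces

open Set Polynomial Metric
open Complex (exp I)

variable {f f' f'' : ℝ → ℝ} {a b c d δ lam B w τ μ : ℝ} {Q P : ℝ[X]} {m n : ℕ}

/-- `[c, d]` is a piece on which `P ∘ f`, with `P' = Q`, can be estimated directly: the functions
`f'`, `f''` and `Q' ∘ f` keep their signs, and each of `|Q ∘ f|` and `|f'|` stays on one side of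
its threshold, `τ` and `μ` respectively. The functions `f'` and `f''` stand for the first two
derivatives of `f`. -/
structure IsMonotonePiece (Q : ℝ[X]) (f f' f'' : ℝ → ℝ) (τ μ c d : ℝ) : Prop where
  deriv : SingleSignedOn f' (Icc c d)
  deriv_deriv : SingleSignedOn f'' (Icc c d)
  eval_derivative : SingleSignedOn (fun x => Q.derivative.eval (f x)) (Icc c d)
  eval_le_or_le : (∀ x ∈ Icc c d, |Q.eval (f x)| ≤ τ) ∨ ∀ x ∈ Icc c d, τ ≤ |Q.eval (f x)|
  deriv_le_or_le : (∀ x ∈ Icc c d, |f' x| ≤ μ) ∨ ∀ x ∈ Icc c d, μ ≤ |f' x|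

theorem splitsInto_isMonotonePiece (hab : a ≤ b)
    (hf : ∀ x ∈ Icc a b, HasDerivWithinAt f (f' x) (Icc a b) x)
    (hf' : ∀ x ∈ Icc a b, HasDerivWithinAt f' (f'' x) (Icc a b) x)
    (hs : SingleSignedOn f'' (Icc a b)) (hQ : Q.natDegree ≤ m) (hτ : 0 ≤ τ) (hμ : 0 ≤ μ) :
    SplitsInto (IsMonotonePiece Q f f' f'' τ μ) (2 ^ (3 * m + 3)) a b := by
  have hfc : ContinuousOn f (Icc a b) := fun x hx => (hf x hx).continuousWithinAt
  have hf'c : ContinuousOn f' (Icc a b) := fun x hx => (hf' x hx).continuousWithinAt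
  have hf'mono := hs.monotoneOn_or_antitoneOn (convex_Icc a b) hf'
  have hQ' : Q.derivative.natDegree ≤ m :=
    (natDegree_derivative_le Q).trans ((Nat.sub_le _ _).trans hQ)
  refine SplitsInto.mono_right (m := 2 * (2 ^ (2 * 1) * (2 ^ (2 * m) * 2 ^ m))) ?_
    (le_of_eq (by ring))
  refine (splitsInto_singleSignedOn_sub_const hf'c hf'mono 0).bind hab fun a₁ b₁ h₁ s₁ hsign => ?_
  simp only [sub_zero] at hsign
  have hfmono := hsign.monotoneOn_or_antitoneOn (convex_Icc a₁ b₁)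
    fun x hx => (hf x (s₁ hx)).mono s₁
  refine (splitsInto_abs_eval_le_or_le h₁ (hf'c.mono s₁) (hf'mono.imp (·.mono s₁) (·.mono s₁))
    natDegree_X_le hμ).bind h₁ fun a₂ b₂ h₂ s₂ hdich' => ?_
  simp only [eval_X] at hdich'
  refine (splitsInto_abs_eval_le_or_le h₂ (hfc.mono (s₂.trans s₁))
    (hfmono.imp (·.mono s₂) (·.mono s₂)) hQ hτ).bind h₂ fun a₃ b₃ h₃ s₃ hdich => ?_
  refine ((splitsInto_singleSignedOn_eval h₃ (hfc.mono ((s₃.trans s₂).trans s₁))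
    (hfmono.imp (·.mono (s₃.trans s₂)) (·.mono (s₃.trans s₂))) hQ').bind (n := 1) h₃
    fun a₄ b₄ _ s₄ hderiv => .single ?_).mono_right (mul_one _).le
  exact
    { deriv := hsign.mono ((s₄.trans s₃).trans s₂)
      deriv_deriv := hs.mono (((s₄.trans s₃).trans s₂).trans s₁)
      eval_derivative := hderiv
      eval_le_or_le := hdich.imp (fun H x hx => H x (s₄ hx)) fun H x hx => H x (s₄ hx)
      deriv_le_or_le := hdich'.imp (fun H x hx => H x (s₃ (s₄ hx))) fun H x hx => H x (s₃ (s₄ hx)) }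

theorem mapsTo_closedBall_of_forall_Icc_subset {S : Set ℝ}
    (hS : ∀ y z, y ≤ z → Icc y z ⊆ S → z - y ≤ w) (hf : ContinuousOn f (Icc c d))
    (hmaps : MapsTo f (Icc c d) S) : MapsTo f (Icc c d) (closedBall (f c) w) := by
  intro x hx
  have hsub : Icc c x ⊆ Icc c d := Icc_subset_Icc_right hx.2
  have hrange : uIcc (f c) (f x) ⊆ S :=
    (intermediate_value_uIcc (by rw [uIcc_of_le hx.1]; exact hf.mono hsub)).trans
      (by rw [uIcc_of_le hx.1]; exact (hmaps.mono_left hsub).image_subset)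
  rw [mem_closedBall, Real.dist_eq, abs_sub_comm, ← max_sub_min_eq_abs']
  exact hS _ _ min_le_max hrange

theorem le_rpow_one_div_of_le_mul_rpow {l D : ℝ} (hl : 0 ≤ l) (hD : 0 ≤ D) (hδ1 : δ < 1)
    (h : l ≤ D * l ^ δ) : l ≤ D ^ (1 / (1 - δ)) := by
  have hδ' : 0 < 1 - δ := sub_pos.2 hδ1
  rcases hl.eq_or_lt with rfl | hl
  · exact Real.rpow_nonneg hD _
  · rw [one_div, Real.le_rpow_inv_iff_of_pos hl.le hD hδ', Real.rpow_sub hl, Real.rpow_one]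
    exact (div_le_iff₀ (Real.rpow_pos_of_pos hl δ)).2 h

theorem sub_le_of_abs_deriv_le (hcd : c ≤ d) (hδ1 : δ < 1) (hB : 0 ≤ B) (hμ : 0 < μ)
    (hball : ∀ y ε, 0 < ε → MapsTo f (Icc c d) (closedBall y ε) → d - c ≤ B * ε ^ δ)
    (hf : ∀ x ∈ Icc c d, HasDerivWithinAt f (f' x) (Icc c d) x)
    (hf' : ∀ x ∈ Icc c d, |f' x| ≤ μ) : d - c ≤ (B * μ ^ δ) ^ (1 / (1 - δ)) := by
  rcases hcd.eq_or_lt with rfl | hlt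
  · rw [sub_self]
    positivity
  have hl : 0 < d - c := sub_pos.2 hlt
  have hmaps : MapsTo f (Icc c d) (closedBall (f c) (μ * (d - c))) := fun x hx => by
    refine ((convex_Icc c d).norm_image_sub_le_of_norm_hasDerivWithin_le hf hf'
      (left_mem_Icc.2 hcd) hx).trans ?_
    rw [Real.norm_eq_abs, abs_of_nonneg (sub_nonneg.2 hx.1)]
    gcongr
    exact hx.2
  refine le_rpow_one_div_of_le_mul_rpow hl.le (by positivity) hδ1 ?_
  rw [mul_assoc, ← Real.mul_rpow hμ.le hl.le]
  exact hball _ _ (mul_pos hμ hl) hmaps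

theorem IsMonotonePiece.norm_integral_le (hpiece : IsMonotonePiece Q f f' f'' τ μ c d)
    (hcd : c ≤ d) (hPQ : P.derivative = Q) (hlam : lam ≠ 0) (hτ : 0 < τ) (hμ : 0 < μ)
    (hw : 0 < w) (hB : 0 ≤ B) (hδ1 : δ < 1)
    (hf : ∀ x ∈ Icc c d, HasDerivWithinAt f (f' x) (Icc c d) x)
    (hf' : ∀ x ∈ Icc c d, HasDerivWithinAt f' (f'' x) (Icc c d) x)
    (hf'' : ContinuousOn f'' (Icc c d))
    (hball : ∀ y ε, 0 < ε → MapsTo f (Icc c d) (closedBall y ε) → d - c ≤ B * ε ^ δ)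
    (hQ : ∀ y z, y ≤ z → (∀ x ∈ Icc y z, |Q.eval x| ≤ τ) → z - y ≤ w) :
    ‖∫ x in c..d, exp (I * (lam : ℂ) * ((P.eval (f x) : ℝ) : ℂ))‖ ≤
      B * w ^ δ + (B * μ ^ δ) ^ (1 / (1 - δ)) + 6 / (τ * μ * |lam|) := by
  have hfc : ContinuousOn f (Icc c d) := fun x hx => (hf x hx).continuousWithinAt
  have hf'c : ContinuousOn f' (Icc c d) := fun x hx => (hf' x hx).continuousWithinAt
  have heval (R : ℝ[X]) : ∀ x ∈ Icc c d, HasDerivWithinAt (fun x => R.eval (f x))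
      (R.derivative.eval (f x) * f' x) (Icc c d) x :=
    fun x hx => (R.hasDerivAt (f x)).comp_hasDerivWithinAt x (hf x hx)
  have h₁ : 0 ≤ B * w ^ δ := by positivity
  have h₂ : 0 ≤ (B * μ ^ δ) ^ (1 / (1 - δ)) := by positivity
  have h₃ : 0 ≤ 6 / (τ * μ * |lam|) := by positivity
  rcases hpiece.eval_le_or_le with hsmall | hlarge
  · have hlength : d - c ≤ B * w ^ δ := hball (f c) w hw
      (mapsTo_closedBall_of_forall_Icc_subset (S := {x | |Q.eval x| ≤ τ}) hQ hfc hsmall)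
    linarith [norm_integral_exp_le_sub (F := fun x => P.eval (f x)) (lam := lam) hcd]
  rcases hpiece.deriv_le_or_le with hsmall' | hlarge'
  · have hlength := sub_le_of_abs_deriv_le hcd hδ1 hB hμ hball hf hsmall'
    linarith [norm_integral_exp_le_sub (F := fun x => P.eval (f x)) (lam := lam) hcd]
  · have hvdc := norm_integral_exp_le_of_deriv_eq_mul hcd hlam hτ hμ (hPQ ▸ heval P) (heval Q) hf'
      ((Q.derivative.continuous.comp_continuousOn hfc).mul hf'c) hf''
      (hpiece.eval_derivative.mul hpiece.deriv) hpiece.deriv_deriv hlarge hlarge'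
    linarith

theorem norm_integral_exp_eval_le (hab : a < b) (hPQ : P.derivative = Q) (hQm : Q.natDegree ≤ m)
    (hlam : lam ≠ 0) (hτ : 0 < τ) (hμ : 0 < μ) (hw : 0 < w) (hB : 0 ≤ B) (hδ1 : δ < 1)
    (hf : ContDiffOn ℝ (n + 2 : ℕ) f (Icc a b))
    (hs : SingleSignedOn (iteratedDerivWithin (n + 2) f (Icc a b)) (Icc a b))
    (hball : ∀ c d, c ≤ d → Icc c d ⊆ Icc a b →
      ∀ y ε, 0 < ε → MapsTo f (Icc c d) (closedBall y ε) → d - c ≤ B * ε ^ δ)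
    (hQ : ∀ y z, y ≤ z → (∀ x ∈ Icc y z, |Q.eval x| ≤ τ) → z - y ≤ w) :
    ‖∫ x in a..b, exp (I * (lam : ℂ) * ((P.eval (f x) : ℝ) : ℂ))‖ ≤
      (2 ^ n * 2 ^ (3 * m + 3) : ℕ) *
        (B * w ^ δ + (B * μ ^ δ) ^ (1 / (1 - δ)) + 6 / (τ * μ * |lam|)) := by
  set D : (ℝ → ℝ) → ℝ → ℝ := fun g => derivWithin g (Icc a b)
  have hu : UniqueDiffOn ℝ (Icc a b) := uniqueDiffOn_Icc hab
  have hf₁ : ContDiffOn ℝ (n + 1 : ℕ) (D f) (Icc a b) := hf.derivWithin hu le_rfl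
  have hf₂ : ContDiffOn ℝ n (D (D f)) (Icc a b) := hf₁.derivWithin hu le_rfl
  have hderiv {g : ℝ → ℝ} {k : ℕ} (hg : ContDiffOn ℝ (k + 1 : ℕ) g (Icc a b)) :
      ∀ x ∈ Icc a b, HasDerivWithinAt g (D g x) (Icc a b) x :=
    fun x hx => (hg.differentiableOn (by simp) x hx).hasDerivWithinAt
  have hs₂ : SingleSignedOn (iteratedDerivWithin n (D (D f)) (Icc a b)) (Icc a b) := by
    rwa [iteratedDerivWithin_succ', iteratedDerivWithin_succ'] at hs
  have hsplit := (splitsInto_singleSignedOn_of_iteratedDerivWithin hab hf₂ hs₂).bind hab.le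
    fun c d hcd hs h => splitsInto_isMonotonePiece hcd (fun x hx => (hderiv hf x (hs hx)).mono hs)
      (fun x hx => (hderiv hf₁ x (hs hx)).mono hs) h hQm hτ.le hμ.le
  have hcont : ContinuousOn (fun x => exp (I * (lam : ℂ) * ((P.eval (f x) : ℝ) : ℂ))) (Icc a b) :=
    ((continuous_const.mul (Complex.continuous_ofReal.comp P.continuous)).cexp).comp_continuousOn
      hf.continuousOn
  exact hsplit.norm_integral_le hab.le hcont (by positivity) fun c d hcd hs h =>
    h.norm_integral_le hcd hPQ hlam hτ hμ hw hB hδ1 (fun x hx => (hderiv hf x (hs hx)).mono hs)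
      (fun x hx => (hderiv hf₁ x (hs hx)).mono hs) (hf₂.continuousOn.mono hs)
      (hball c d hcd hs) hQ

-- The three contributions are of the same order `σ ^ δ` once `σ = |λ| ^ (-1 / (m + 1))`.
theorem piece_contributions_le {L A K σ : ℝ} (hL : 0 ≤ L) (hA : 1 ≤ A) (hK : 0 ≤ K) (hσ : 0 < σ)
    (hδ0 : 0 ≤ δ) (hδ1 : δ < 1) (hlam : σ ^ (m + 1) * |lam| = 1) :
    L * A * (K * σ) ^ δ + (L * A * (σ ^ (1 - δ)) ^ δ) ^ (1 / (1 - δ)) +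
        6 / (σ ^ m * σ ^ (1 - δ) * |lam|) ≤
      (L * K ^ δ + L ^ (1 / (1 - δ)) + 6) * A ^ (1 / (1 - δ)) * σ ^ δ := by
  have hδ' : 0 < 1 - δ := sub_pos.2 hδ1
  have hA0 : 0 ≤ A := zero_le_one.trans hA
  have hAe : A ≤ A ^ (1 / (1 - δ)) :=
    Real.self_le_rpow_of_one_le hA ((one_le_div hδ').2 (by linarith))
  have hvalue : L * A * (K * σ) ^ δ = L * K ^ δ * A * σ ^ δ := by
    rw [Real.mul_rpow hK hσ.le]
    ring
  have hderiv : (L * A * (σ ^ (1 - δ)) ^ δ) ^ (1 / (1 - δ)) =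
      L ^ (1 / (1 - δ)) * A ^ (1 / (1 - δ)) * σ ^ δ := by
    rw [Real.mul_rpow (by positivity) (by positivity), Real.mul_rpow hL hA0, ← Real.rpow_mul hσ.le,
      ← Real.rpow_mul hσ.le]
    congr 2
    field_simp
  have hosc : 6 / (σ ^ m * σ ^ (1 - δ) * |lam|) = 6 * σ ^ δ := by
    have : σ ^ m * σ ^ (1 - δ) * |lam| = (σ ^ δ)⁻¹ := by
      rw [Real.rpow_sub hσ, Real.rpow_one]
      rw [pow_succ] at hlam
      field_simp
      linarith
    rw [this, div_inv_eq_mul]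
  rw [hvalue, hderiv, hosc]
  calc L * K ^ δ * A * σ ^ δ + L ^ (1 / (1 - δ)) * A ^ (1 / (1 - δ)) * σ ^ δ + 6 * σ ^ δ
      ≤ L * K ^ δ * A ^ (1 / (1 - δ)) * σ ^ δ + L ^ (1 / (1 - δ)) * A ^ (1 / (1 - δ)) * σ ^ δ +
        6 * A ^ (1 / (1 - δ)) * σ ^ δ := by
        gcongr
        exact le_mul_of_one_le_right (by norm_num) (hA.trans hAe)
    _ = _ := by ring

end Pieces

theorem rpow_neg_one_div_pow_mul_self {x : ℝ} {d : ℕ} (hx : 0 < x) (hd : d ≠ 0) :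
    (x ^ (-(1 / d : ℝ))) ^ d * x = 1 := by
  rw [← Real.rpow_mul_natCast hx.le, neg_mul, one_div_mul_cancel (Nat.cast_ne_zero.2 hd),
    Real.rpow_neg_one, inv_mul_cancel₀ hx.ne']

theorem stmt_2_general (N d : ℕ) (hN : 2 ≤ N) (hd : 2 ≤ d) (δ : ℝ) (hδ0 : 0 < δ) (hδ1 : δ < 1) :
    ∃ C : ℝ, 0 < C ∧
      ∀ (a b : ℝ), a ≤ b →
      ∀ f : ℝ → ℝ, ContDiffOn ℝ N f (Set.Icc a b) →
      ((∀ x ∈ Set.Icc a b, 0 ≤ iteratedDerivWithin N f (Set.Icc a b) x) ∨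
        (∀ x ∈ Set.Icc a b, iteratedDerivWithin N f (Set.Icc a b) x ≤ 0)) →
      ∀ A : ℝ, 1 ≤ A →
      (∀ lam : ℝ, lam ≠ 0 →
        ‖∫ x in Set.Icc a b, Complex.exp (Complex.I * (lam : ℂ) * (f x : ℂ))‖ ≤
          A * |lam| ^ (-δ)) →
      ∀ P : Polynomial ℝ, P.natDegree = d → IsSND P.derivative →
      ∀ lam : ℝ, 1 ≤ |lam| →
        ‖∫ x in Set.Icc a b, Complex.exp (Complex.I * (lam : ℂ) * ((P.eval (f x) : ℝ) : ℂ))‖ ≤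
          C * A ^ (1 / (1 - δ)) * |lam| ^ (-(δ / (d : ℝ))) := by
  obtain ⟨n, rfl⟩ := Nat.exists_eq_add_of_le' hN
  obtain ⟨m, rfl⟩ := Nat.exists_eq_add_of_le' (one_le_two.trans hd)
  obtain ⟨L, hL, hsublevel⟩ := exists_length_le_of_norm_integral_exp_le hδ1
  obtain ⟨K, hK, hSND⟩ := IsSND.exists_sub_le (m := m) (by lia)
  refine ⟨(2 ^ n * 2 ^ (3 * m + 3) : ℕ) * (L * K ^ δ + L ^ (1 / (1 - δ)) + 6), by positivity, ?_⟩
  intro a b hab f hf hs A hA hdecay P hP hPSND lam hlam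
  rcases hab.eq_or_lt with rfl | hab
  · simp only [Set.Icc_self, Measure.restrict_singleton, Real.volume_singleton, zero_smul,
      integral_zero_measure, norm_zero]
    positivity
  have hP' : P.derivative.natDegree = m := by rw [Polynomial.natDegree_derivative, hP]; rfl
  have hlam0 : 0 < |lam| := zero_lt_one.trans_le hlam
  set σ : ℝ := |lam| ^ (-(1 / (m + 1 : ℕ) : ℝ))
  have hσ : 0 < σ := Real.rpow_pos_of_pos hlam0 _
  have hσ1 : σ ≤ 1 := Real.rpow_le_one_of_one_le_of_nonpos hlam (by rw [neg_nonpos]; positivity)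
  have hσδ : |lam| ^ (-(δ / (m + 1 : ℕ))) = σ ^ δ := by
    rw [← Real.rpow_mul hlam0.le, neg_mul, one_div_mul_eq_div]
  rw [integral_Icc_eq_integral_Ioc, ← intervalIntegral.integral_of_le hab.le, hσδ, mul_assoc,
    mul_assoc, ← mul_assoc _ _ (σ ^ δ)]
  refine (norm_integral_exp_eval_le hab rfl hP'.le (abs_pos.1 hlam0) (pow_pos hσ m)
    (Real.rpow_pos_of_pos hσ (1 - δ)) (mul_pos hK hσ) (by positivity) hδ1 hf hs
    (hsublevel a b f hf.continuousOn A hdecay)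
    fun y z => hSND _ hP' hPSND σ y z hσ hσ1).trans ?_
  gcongr
  exact piece_contributions_le hL.le hA hK.le hσ hδ0.le hδ1
    (rpow_neg_one_div_pow_mul_self hlam0 m.succ_ne_zero)

/-- Let `N ≥ 2`, `0 < δ < 1`, `A ≥ 1`. If `f` is smooth on `I = [a, b]`
with `f^{(N)}` single-signed on `I`, and `|∫_I e^{iλ f}| ≤ A |λ|^{-δ}` for all `λ ≠ 0`,
then there is a constant `C = C(d, N, δ)` such that for every polynomial `P` of degree
`d ≥ 2` whose derivative `P'` is an SND polynomial of degree `d - 1`, and all `|λ| ≥ 1`,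
`|∫_I e^{iλ P(f)}| ≤ C · A^{1/(1-δ)} · |λ|^{-δ/d}`. -/
theorem stmt_2 (N d : ℕ) (hN : 2 ≤ N) (hd : 2 ≤ d) (δ : ℝ) (hδ0 : 0 < δ) (hδ1 : δ < 1) :
    ∃ C : ℝ, 0 < C ∧
      ∀ (a b : ℝ), a ≤ b →
      ∀ f : ℝ → ℝ, ContDiffOn ℝ (⊤ : ℕ∞) f (Set.Icc a b) →
      ((∀ x ∈ Set.Icc a b, 0 ≤ iteratedDerivWithin N f (Set.Icc a b) x) ∨
        (∀ x ∈ Set.Icc a b, iteratedDerivWithin N f (Set.Icc a b) x ≤ 0)) →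
      ∀ A : ℝ, 1 ≤ A →
      (∀ lam : ℝ, lam ≠ 0 →
        ‖∫ x in Set.Icc a b, Complex.exp (Complex.I * (lam : ℂ) * (f x : ℂ))‖ ≤
          A * |lam| ^ (-δ)) →
      ∀ P : Polynomial ℝ, P.natDegree = d →
        P.derivative.natDegree = d - 1 → IsSND P.derivative →
      ∀ lam : ℝ, 1 ≤ |lam| →
        ‖∫ x in Set.Icc a b, Complex.exp (Complex.I * (lam : ℂ) * ((P.eval (f x) : ℝ) : ℂ))‖ ≤
          C * A ^ (1 / (1 - δ)) * |lam| ^ (-(δ / (d : ℝ))) := by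
  obtain ⟨C, hC, hbound⟩ := stmt_2_general N d hN hd δ hδ0 hδ1
  exact ⟨C, hC, fun a b hab f hf hs A hA hdecay P hP _ =>
    hbound a b hab f (hf.of_le (mod_cast le_top)) hs A hA hdecay P hP⟩
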